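/- Let X, Y be Banach spaces, C ⊆ Y a closed convex pointed cone with nonempty interior, and f : X → Y be C-convex. Then for every y ∈ Y, the function x ↦ D_{−C}(f(x) − y) is convex on X. -/

import Mathlib

open Metric Pointwise in
theorem od_sub {Y : Type*} [NormedAddCommGroup Y] [NormedSpace ℝ Y]
    (K : Set Y) (hK : IsClosed K) (h0 : (0:Y) ∈ K) (hadd : ∀ a ∈ K, ∀ b ∈ K, a + b ∈ K) :
    (∀ u v : Y, v ∈ K → infDist (u + v) K - infDist (u + v) Kᶜ ≤ infDist u K - infDist u Kᶜ) ∧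
    (∀ u v : Y, infDist (u + v) K - infDist (u + v) Kᶜ ≤
      (infDist u K - infDist u Kᶜ) + (infDist v K - infDist v Kᶜ)) := by
  have hne : K.Nonempty := ⟨0, h0⟩
  have hball : ∀ u ∈ K, ∀ w, dist u w < infDist u Kᶜ → w ∈ K := by
    intro u hu w hw
    by_contra h
    exact absurd (infDist_le_dist_of_mem (x := u) (show w ∈ Kᶜ from h)) (not_le.2 hw)
  have mono : ∀ u v : Y, v ∈ K →
      infDist (u + v) K - infDist (u + v) Kᶜ ≤ infDist u K - infDist u Kᶜ := by
    intro u v hv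
    have h1 : infDist (u + v) K ≤ infDist u K := by
      refine (le_infDist hne).2 fun p hp => ?_
      have := infDist_le_dist_of_mem (x := u + v) (hadd p hp v hv)
      simpa using this
    have h2 : infDist u Kᶜ ≤ infDist (u + v) Kᶜ := by
      rcases (Kᶜ).eq_empty_or_nonempty with h | h
      · simp [h]
      refine (le_infDist h).2 fun w hw => ?_
      have hw' : w - v ∈ Kᶜ := fun h => hw (by simpa using hadd _ h v hv)
      have := infDist_le_dist_of_mem (x := u) hw'
      rw [dist_eq_norm] at this ⊢
      convert this using 2
      abel
    linarith
  have lip : ∀ u v : Y, infDist v K - infDist v Kᶜ ≤ infDist u K - infDist u Kᶜ + dist v u := by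
    intro u v
    have a1 := infDist_le_infDist_add_dist (s := K) (x := v) (y := u)
    have a2 := infDist_le_infDist_add_dist (s := Kᶜ) (x := u) (y := v)
    have p1 := infDist_nonneg (s := K) (x := u)
    have p2 := infDist_nonneg (s := Kᶜ) (x := v)
    have hd := dist_comm u v
    by_cases hv : v ∈ K
    · rw [infDist_zero_of_mem hv]; linarith
    by_cases hu : u ∈ K
    swap
    · rw [infDist_zero_of_mem (s := Kᶜ) (x := u) hu]; linarith
    rw [infDist_zero_of_mem hu, infDist_zero_of_mem (s := Kᶜ) (x := v) hv]
    set r := infDist u Kᶜ with hr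
    have hr0 : 0 ≤ r := infDist_nonneg
    have hrd : r ≤ dist u v := infDist_le_dist_of_mem hv
    have hpos : 0 < dist u v := dist_pos.2 (fun h => hv (h ▸ hu))
    have hcb : closedBall u r ⊆ K := by
      rcases hr0.eq_or_lt with h | h
      · rw [← h, closedBall_zero]; simpa using hu
      · rw [← closure_ball u h.ne']
        exact closure_minimal (fun w hw => hball u hu w (by rw [dist_comm]; exact hw)) hK
    have hb : AffineMap.lineMap u v (r / dist u v) ∈ K := by
      apply hcb
      rw [mem_closedBall, dist_lineMap_left, Real.norm_of_nonneg (by positivity)]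
      rw [div_mul_cancel₀ _ hpos.ne']
    have := infDist_le_dist_of_mem (x := v) hb
    rw [dist_right_lineMap, Real.norm_of_nonneg (by rw [sub_nonneg, div_le_one hpos]; exact hrd),
      sub_mul, div_mul_cancel₀ _ hpos.ne'] at this
    linarith
  have key : ∀ u v : Y, infDist (u + v) K - infDist (u + v) Kᶜ ≤
      (infDist u K - infDist u Kᶜ) + infDist v K := by
    intro u v
    rw [← sub_le_iff_le_add']
    refine (le_infDist hne).2 fun p hp => ?_
    have h1 := lip (u + p) (u + v)
    have h2 := mono u p hp
    rw [dist_add_left] at h1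
    linarith
  refine ⟨mono, fun u v => ?_⟩
  by_cases hv : v ∈ K
  swap
  · rw [infDist_zero_of_mem (s := Kᶜ) (x := v) hv]; linarith [key u v]
  by_cases hu : u ∈ K
  swap
  · rw [infDist_zero_of_mem (s := Kᶜ) (x := u) hu, add_comm u v]; linarith [key v u]
  rw [infDist_zero_of_mem hu, infDist_zero_of_mem hv, infDist_zero_of_mem (hadd u hu v hv)]
  suffices infDist u Kᶜ + infDist v Kᶜ ≤ infDist (u + v) Kᶜ by linarith
  rcases (Kᶜ).eq_empty_or_nonempty with h | h
  · simp [h]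
  refine (le_infDist h).2 fun w hw => ?_
  by_contra! hlt
  have hsc : ∀ u ∈ K, ∀ e : Y, ∀ R : ℝ, ‖e‖ < R → u + (infDist u Kᶜ / R) • e ∈ K := by
    intro u hu e R hR
    have hRp : 0 < R := (norm_nonneg e).trans_lt hR
    rcases (infDist_nonneg (s := Kᶜ) (x := u)).eq_or_lt with h | h
    · rw [← h]; simpa using hu
    · apply hball u hu
      rw [dist_self_add_right, norm_smul, Real.norm_of_nonneg (by positivity), div_mul_eq_mul_div,
        div_lt_iff₀ hRp]
      exact mul_lt_mul_of_pos_left hR h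
  have hn : ‖w - (u + v)‖ < infDist u Kᶜ + infDist v Kᶜ := by
    rwa [← dist_eq_norm, dist_comm]
  have hRp := (norm_nonneg _).trans_lt hn
  apply hw
  have := hadd _ (hsc u hu _ _ hn) _ (hsc v hv _ _ hn)
  convert this using 1
  rw [add_add_add_comm, ← add_smul, ← add_div, div_self hRp.ne']
  simp

open Metric Pointwise in
theorem od_smul {Y : Type*} [NormedAddCommGroup Y] [NormedSpace ℝ Y]
    (K : Set Y) (h0 : (0:Y) ∈ K) (hc : ∀ t : ℝ, 0 ≤ t → ∀ y ∈ K, t • y ∈ K)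
    (t : ℝ) (ht : 0 ≤ t) (u : Y) :
    infDist (t • u) K - infDist (t • u) Kᶜ ≤ t * (infDist u K - infDist u Kᶜ) := by
  rcases ht.eq_or_lt with h | h
  · subst h
    simp only [zero_smul, zero_mul, infDist_zero_of_mem h0]
    linarith [infDist_nonneg (s := Kᶜ) (x := (0:Y))]
  have hK : t • K = K := by
    ext y
    rw [Set.mem_smul_set_iff_inv_smul_mem₀ h.ne']
    refine ⟨fun hy => ?_, hc _ (by positivity) y⟩
    have := hc t ht _ hy
    rwa [smul_inv_smul₀ h.ne'] at this
  have hK' : t • Kᶜ = Kᶜ := by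
    ext y
    rw [Set.mem_smul_set_iff_inv_smul_mem₀ h.ne', Set.mem_compl_iff, Set.mem_compl_iff,
      ← Set.mem_smul_set_iff_inv_smul_mem₀ h.ne', hK]
  have h1 := infDist_smul₀ h.ne' K u
  have h2 := infDist_smul₀ h.ne' Kᶜ u
  rw [hK] at h1
  rw [hK'] at h2
  rw [h1, h2, Real.norm_of_nonneg ht, mul_sub]


/-- If `f : X → Y` is `C`-convex, then for every `y ∈ Y` the function
`x ↦ D_{-C}(f x - y)` is convex on `X`. -/
theorem orientedDist_comp_convex
    {X Y : Type*} [NormedAddCommGroup X] [NormedSpace ℝ X] [CompleteSpace X]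
    [NormedAddCommGroup Y] [NormedSpace ℝ Y] [CompleteSpace Y]
    (C : Set Y) (hCclosed : IsClosed C) (hCconv : Convex ℝ C)
    (hCcone : ∀ t : ℝ, 0 ≤ t → ∀ y ∈ C, t • y ∈ C)
    (hCpointed : C ∩ (-C) = {0}) (hCint : (interior C).Nonempty)
    (f : X → Y)
    (hf : ∀ x z : X, ∀ t : ℝ, 0 ≤ t → t ≤ 1 →
      t • f x + (1 - t) • f z - f (t • x + (1 - t) • z) ∈ C)
    (y : Y) :
    ConvexOn ℝ Set.univ (fun x : X =>
      Metric.infDist (f x - y) (-C) - Metric.infDist (f x - y) ((-C)ᶜ)) := by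

  have hadd : ∀ a ∈ C, ∀ b ∈ C, a + b ∈ C := by
    intro a ha b hb
    have := hCcone 2 (by norm_num) _ (hCconv ha hb (a := 1/2) (b := 1/2) (by norm_num)
      (by norm_num) (by norm_num))
    simpa [smul_smul] using this
  have h0 : (0:Y) ∈ C := by
    obtain ⟨c, hc⟩ := hCint
    simpa using hCcone 0 le_rfl c (interior_subset hc)
  have hK0 : (0:Y) ∈ -C := by simpa using h0
  obtain ⟨mono, sub⟩ := od_sub (-C) hCclosed.neg hK0 (by
    intro a ha b hb
    have := hadd _ ha _ hb
    rw [Set.mem_neg]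
    rwa [neg_add])
  have hsm := od_smul (-C) hK0 (by
    intro t ht y hy
    rw [Set.mem_neg, ← smul_neg]
    exact hCcone t ht _ hy)
  refine ⟨convex_univ, fun x _ z _ a b ha hb hab => ?_⟩
  obtain rfl : b = 1 - a := by linarith
  have hk := hf x z a ha (by linarith)
  have h1 := mono (a • (f x - y) + (1 - a) • (f z - y))
    (-(a • f x + (1 - a) • f z - f (a • x + (1 - a) • z))) (by simpa using hk)
  have h2 := sub (a • (f x - y)) ((1 - a) • (f z - y))
  have h3 := hsm a ha (f x - y)
  have h4 := hsm (1 - a) hb (f z - y)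
  have e : a • (f x - y) + (1 - a) • (f z - y) +
    -(a • f x + (1 - a) • f z - f (a • x + (1 - a) • z)) = f (a • x + (1 - a) • z) - y := by
    module
  rw [e] at h1
  simp only [smul_eq_mul]
  linarith
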